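/- Let n be a positive integer and let f : F_3^n → F_3 be a function with f(0) = 0 such that for every v ∈ F_3^n there exists x ∈ F_3^n with f(x) ≠ v·x. Then the code C_f is minimal (for every nonzero codeword c ∈ C_f, every codeword c' ∈ C_f with supp(c') ⊆ supp(c) is a scalar multiple λ·c, λ ∈ F_3) if and only if for all pairwise distinct w_1, w_2, w_3 ∈ F_3^n with w_1 + w_2 + w_3 = 0 one has both Re(f̂(w_1)) + Re(f̂(w_2)) + Re(f̂(w_3)) ≠ 3^n and Re(f̂(w_1)) + Re(f̂(w_2)) − 2·Re(f̂(w_3)) ≠ 3^n. -/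

import Mathlib

open Matrix Finset

/-!
The words `α f + w·x` form the code spanned by `f` and the simplex code of linear forms. The simplex
code is minimal, and adjoining `f` to a minimal code keeps it minimal exactly when no `f - g`, with
`g` in the old code, covers or is covered by a nonzero old codeword `u`. Here this compares the
hyperplane `u·x = 0` with the set `f(x) = w·x`.

Since `Re ζ^a` is `1` or `-1/2` according to whether `a = 0`, the number `Re f̂(w)` is an affine
function of the number of zeros of `f(x) - w·x`. Three distinct vectors of sum zero form a line
`w, w + u, w - u`, and counting zeros along it shows that the two Walsh sums fall short of `3^n` by
`9/2` times the number of `x` witnessing the failure of `{u·x = 0} ⊆ {f(x) = w·x}`, respectively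
of the reverse inclusion.
-/

section MinimalCode

variable {K X : Type*} [Field K]

/-- A linear code `C ⊆ K^X` is minimal if a nonzero codeword covers, in the sense of inclusion of
supports, no codewords other than its own scalar multiples. -/
def IsMinimalCode (C : Submodule K (X → K)) : Prop :=
  ∀ c ∈ C, c ≠ 0 → ∀ c' ∈ C, Function.support c' ⊆ Function.support c → ∃ a : K, c' = a • c

variable {L : Submodule K (X → K)} {f g u : X → K}

lemma sub_mem_span_singleton_sup (f : X → K) (hg : g ∈ L) : f - g ∈ K ∙ f ⊔ L :=
  sub_mem (Submodule.mem_sup_left (Submodule.mem_span_singleton_self f))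
    (Submodule.mem_sup_right hg)

lemma IsMinimalCode.not_support_sub_subset (hC : IsMinimalCode (K ∙ f ⊔ L)) (hf : f ∉ L)
    (hg : g ∈ L) (hu : u ∈ L) (hu0 : u ≠ 0) :
    ¬ Function.support (f - g) ⊆ Function.support u := by
  intro hsupp
  obtain ⟨a, ha⟩ := hC u (Submodule.mem_sup_right hu) hu0 (f - g)
    (sub_mem_span_singleton_sup f hg) hsupp
  have hfg : f - g ∈ L := ha ▸ L.smul_mem a hu
  exact hf ((L.sub_mem_iff_left hg).mp hfg)

lemma IsMinimalCode.not_support_subset_sub (hC : IsMinimalCode (K ∙ f ⊔ L)) (hf : f ∉ L)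
    (hg : g ∈ L) (hu : u ∈ L) (hu0 : u ≠ 0) :
    ¬ Function.support u ⊆ Function.support (f - g) := by
  intro hsupp
  have hfg0 : f - g ≠ 0 := fun h ↦ hf (sub_eq_zero.mp h ▸ hg)
  obtain ⟨a, rfl⟩ := hC (f - g) (sub_mem_span_singleton_sup f hg) hfg0 u
    (Submodule.mem_sup_right hu) hsupp
  have hfg : f - g ∈ L := (L.smul_mem_iff (smul_ne_zero_iff.mp hu0).1).mp hu
  exact hf ((L.sub_mem_iff_left hg).mp hfg)

lemma support_smul_add_eq_support_sub {a : K} (ha : a ≠ 0) (f g : X → K) :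
    Function.support (a • f + g) = Function.support (f - -a⁻¹ • g) := by
  have hfactor : a • f + g = a • (f - -a⁻¹ • g) := by
    rw [neg_smul, sub_neg_eq_add, smul_add, smul_inv_smul₀ ha]
  rw [hfactor, Function.support_const_smul_of_ne_zero _ _ ha]

lemma IsMinimalCode.span_singleton_sup (hL : IsMinimalCode L)
    (hcover : ∀ g ∈ L, ∀ u ∈ L, u ≠ 0 →
      ¬ Function.support (f - g) ⊆ Function.support u ∧
      ¬ Function.support u ⊆ Function.support (f - g)) :
    IsMinimalCode (K ∙ f ⊔ L) := by
  intro c hc hc0 c' hc' hsupp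
  obtain ⟨_, hα, g, hg, rfl⟩ := Submodule.mem_sup.mp hc
  obtain ⟨_, hβ, g', hg', rfl⟩ := Submodule.mem_sup.mp hc'
  obtain ⟨α, rfl⟩ := Submodule.mem_span_singleton.mp hα
  obtain ⟨β, rfl⟩ := Submodule.mem_span_singleton.mp hβ
  rcases eq_or_ne α 0 with rfl | hα0
  · rw [zero_smul, zero_add] at hc0 hsupp ⊢
    rcases eq_or_ne β 0 with rfl | hβ0
    · rw [zero_smul, zero_add] at hsupp ⊢
      exact hL g hg hc0 g' hg' hsupp
    · rw [support_smul_add_eq_support_sub hβ0] at hsupp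
      exact absurd hsupp (hcover _ (L.smul_mem _ hg') g hg hc0).1
  · -- Subtracting a multiple of `c` eliminates `f` from `c'` without enlarging its support.
    set u := β • f + g' - (β * α⁻¹) • (α • f + g) with hu
    have hu_mem : u ∈ L := by
      have : u = g' - (β * α⁻¹) • g := by
        rw [hu, smul_add, smul_smul, inv_mul_cancel_right₀ hα0]
        abel
      exact this ▸ L.sub_mem hg' (L.smul_mem _ hg)
    have hu_supp : Function.support u ⊆ Function.support (α • f + g) :=
      (Function.support_sub _ _).trans
        (Set.union_subset hsupp (Function.support_const_smul_subset _ _))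
    rw [support_smul_add_eq_support_sub hα0] at hu_supp
    have hu0 : u = 0 := by
      by_contra hne
      exact (hcover _ (L.smul_mem _ hg) u hu_mem hne).2 hu_supp
    exact ⟨β * α⁻¹, sub_eq_zero.mp hu0⟩

theorem isMinimalCode_span_singleton_sup_iff (hL : IsMinimalCode L) (hf : f ∉ L) :
    IsMinimalCode (K ∙ f ⊔ L) ↔ ∀ g ∈ L, ∀ u ∈ L, u ≠ 0 →
      ¬ Function.support (f - g) ⊆ Function.support u ∧
      ¬ Function.support u ⊆ Function.support (f - g) :=
  ⟨fun hC _ hg _ hu hu0 ↦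
    ⟨hC.not_support_sub_subset hf hg hu hu0, hC.not_support_subset_sub hf hg hu hu0⟩,
    hL.span_singleton_sup⟩

end MinimalCode

section NonzeroVectors

variable {V : Type*} [Zero V]

lemma forall_ne_zero_iff {p : V → Prop} (h0 : p 0) :
    (∀ x : {x : V // x ≠ 0}, p x) ↔ ∀ x, p x := by
  refine ⟨fun h x ↦ ?_, fun h x ↦ h x⟩
  rcases eq_or_ne x 0 with rfl | hx
  exacts [h0, h ⟨x, hx⟩]

lemma support_restrict_ne_zero_subset_iff {M : Type*} [Zero M] {a b : V → M} (ha : a 0 = 0) :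
    Function.support (fun x : {x : V // x ≠ 0} ↦ a x) ⊆
      Function.support (fun x : {x : V // x ≠ 0} ↦ b x) ↔ ∀ x, b x = 0 → a x = 0 := by
  rw [← forall_ne_zero_iff (p := fun x ↦ b x = 0 → a x = 0) fun _ ↦ ha]
  exact forall_congr' fun _ ↦ not_imp_not

end NonzeroVectors

section FunctionCode

variable {K ι : Type*} [Field K] [Fintype ι]

lemma exists_eq_smul_of_dotProduct_eq_zero_imp {u v : ι → K}
    (h : ∀ x, u ⬝ᵥ x = 0 → v ⬝ᵥ x = 0) : ∃ a : K, v = a • u := by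
  classical
  have hmem : dotProductEquiv K ι v ∈
      Submodule.span K (Set.range fun _ : Unit ↦ dotProductEquiv K ι u) :=
    mem_span_of_iInf_ker_le_ker fun x hx ↦ h x (by simpa using hx)
  rw [Set.range_const] at hmem
  obtain ⟨a, ha⟩ := Submodule.mem_span_singleton.mp hmem
  exact ⟨a, (dotProductEquiv K ι).injective (by rw [map_smul, ha])⟩

/-- The encoder of the simplex code, sending `w` to the values of the linear form `w ⬝ᵥ ·` at all
nonzero vectors; these vectors are the columns of its generator matrix. Proportional columns are
not identified. -/
def simplexEncoder : (ι → K) →ₗ[K] ({x : ι → K // x ≠ 0} → K) :=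
  Matrix.vecMulLinear (Matrix.of fun i x ↦ x.1 i)

lemma simplexEncoder_injective :
    Function.Injective (simplexEncoder : (ι → K) →ₗ[K] ({x : ι → K // x ≠ 0} → K)) := by
  intro v w h
  refine dotProduct_eq v w ((forall_ne_zero_iff ?_).mp (congrFun h))
  rw [dotProduct_zero, dotProduct_zero]

lemma isMinimalCode_range_simplexEncoder :
    IsMinimalCode (LinearMap.range (simplexEncoder (K := K) (ι := ι))) := by
  rintro _ ⟨u, rfl⟩ - _ ⟨v, rfl⟩ hsupp
  have hker : ∀ x, u ⬝ᵥ x = 0 → v ⬝ᵥ x = 0 :=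
    (support_restrict_ne_zero_subset_iff (dotProduct_zero v)).mp hsupp
  obtain ⟨a, rfl⟩ := exists_eq_smul_of_dotProduct_eq_zero_imp hker
  exact ⟨a, map_smul _ a u⟩

/-- The code `C_f` of words `α f(x) + w·x`, with coordinates indexed by the nonzero vectors `x`. -/
def functionCode (f : (ι → K) → K) : Submodule K ({x : ι → K // x ≠ 0} → K) :=
  K ∙ (fun x ↦ f x.1) ⊔ LinearMap.range simplexEncoder

lemma coe_functionCode (f : (ι → K) → K) :
    (functionCode f : Set ({x : ι → K // x ≠ 0} → K)) =
      {c | ∃ (α : K) (w : ι → K), c = fun x ↦ α * f x.1 + w ⬝ᵥ x.1} := by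
  ext c
  constructor
  · intro hc
    obtain ⟨_, hα, _, ⟨w, rfl⟩, rfl⟩ := Submodule.mem_sup.mp hc
    obtain ⟨α, rfl⟩ := Submodule.mem_span_singleton.mp hα
    exact ⟨α, w, rfl⟩
  · rintro ⟨α, w, rfl⟩
    exact Submodule.add_mem_sup (Submodule.smul_mem _ α (Submodule.mem_span_singleton_self _))
      ⟨w, rfl⟩

theorem isMinimalCode_functionCode_iff {f : (ι → K) → K} (hf0 : f 0 = 0)
    (hf : ∀ v, ∃ x, f x ≠ v ⬝ᵥ x) :
    IsMinimalCode (functionCode f) ↔ ∀ w u, u ≠ 0 →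
      ¬ (∀ x, u ⬝ᵥ x = 0 → f x = w ⬝ᵥ x) ∧ ¬ (∀ x, f x = w ⬝ᵥ x → u ⬝ᵥ x = 0) := by
  have hf_mem : (fun x : {x : ι → K // x ≠ 0} ↦ f x) ∉ LinearMap.range simplexEncoder := by
    rintro ⟨v, hv⟩
    obtain ⟨x, hx⟩ := hf v
    refine hx ((forall_ne_zero_iff (p := fun x ↦ f x = v ⬝ᵥ x) ?_).mp (fun x ↦ ?_) x)
    · rw [hf0, dotProduct_zero]
    · exact (congrFun hv x).symm
  have hu0 (u : ι → K) : simplexEncoder u ≠ 0 ↔ u ≠ 0 :=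
    map_ne_zero_iff _ simplexEncoder_injective
  have hsub (w u : ι → K) :
      Function.support ((fun x : {x : ι → K // x ≠ 0} ↦ f x) - simplexEncoder w) ⊆
        Function.support (simplexEncoder u) ↔ ∀ x, u ⬝ᵥ x = 0 → f x = w ⬝ᵥ x := by
    have ha : f 0 - w ⬝ᵥ 0 = 0 := by rw [hf0, dotProduct_zero, sub_zero]
    simp only [← sub_eq_zero (a := f _)]
    exact support_restrict_ne_zero_subset_iff (a := fun x ↦ f x - w ⬝ᵥ x) (b := (u ⬝ᵥ ·)) ha
  have hsup (w u : ι → K) :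
      Function.support (simplexEncoder u) ⊆
        Function.support ((fun x : {x : ι → K // x ≠ 0} ↦ f x) - simplexEncoder w) ↔
          ∀ x, f x = w ⬝ᵥ x → u ⬝ᵥ x = 0 := by
    simp only [← sub_eq_zero (a := f _)]
    exact support_restrict_ne_zero_subset_iff (b := fun x ↦ f x - w ⬝ᵥ x) (dotProduct_zero u)
  rw [functionCode, isMinimalCode_span_singleton_sup_iff isMinimalCode_range_simplexEncoder hf_mem]
  simp only [LinearMap.mem_range, forall_exists_index, forall_apply_eq_imp_iff, hu0, hsub, hsup]

end FunctionCode

section Counting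

variable {K : Type*} [Field K] [Fintype K] [DecidableEq K]

lemma card_mul_card_dotProduct_eq_zero {ι : Type*} [Fintype ι] [DecidableEq ι] {u : ι → K}
    (hu : u ≠ 0) :
    Fintype.card K * #{x : ι → K | u ⬝ᵥ x = 0} = Fintype.card K ^ Fintype.card ι := by
  set φ := dotProductEquiv K ι u
  have hφ : φ ≠ 0 := (dotProductEquiv K ι).map_ne_zero_iff.mpr hu
  have hker : #{x : ι → K | u ⬝ᵥ x = 0} = Fintype.card K ^ Module.finrank K φ.ker := by
    rw [← Nat.card_eq_fintype_card, ← Module.natCard_eq_pow_finrank, ← Fintype.card_subtype,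
      ← Nat.card_eq_fintype_card]
    rfl
  rw [hker, ← pow_succ', φ.finrank_ker_add_one_of_ne_zero hφ, Module.finrank_fintype_fun_eq_card]

lemma card_filter_eq_add_mul (a b c : K) :
    #{t : K | a = b + t * c} =
      (if c ≠ 0 then 1 else 0) + Fintype.card K * (if c = 0 ∧ a = b then 1 else 0) := by
  rcases eq_or_ne c 0 with rfl | hc
  · by_cases hab : a = b <;> simp [hab]
  · have hroot : ({t : K | a = b + t * c} : Finset K) = {(a - b) / c} := by
      ext t
      rw [mem_filter_univ, mem_singleton, eq_div_iff hc, eq_sub_iff_add_eq', eq_comm]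
    simp [hroot, hc]

lemma sum_card_filter_eq_add_mul {X : Type*} [Fintype X] (f g h : X → K) :
    ∑ t : K, #{x | f x = g x + t * h x} =
      #{x | h x ≠ 0} + Fintype.card K * #{x | h x = 0 ∧ f x = g x} := by
  calc ∑ t : K, #{x | f x = g x + t * h x}
      = ∑ x, #{t : K | f x = g x + t * h x} := by
        simp only [card_filter]
        exact sum_comm
    _ = #{x | h x ≠ 0} + Fintype.card K * #{x | h x = 0 ∧ f x = g x} := by
        simp only [card_filter_eq_add_mul, sum_add_distrib, ← mul_sum, ← card_filter]

end Counting

section WalshTransform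

variable {ι : Type*} [Fintype ι] [DecidableEq ι]

/-- The Walsh transform `f̂(w) = ∑ ζ^(f(x) - w·x)` of a ternary function, where `ζ = exp(2πi/3)`. -/
noncomputable def walshTransform (f : (ι → ZMod 3) → ZMod 3) (w : ι → ZMod 3) : ℂ :=
  ∑ x : ι → ZMod 3, Complex.exp (2 * Real.pi * Complex.I / 3) ^ (f x - w ⬝ᵥ x).val

lemma re_exp_two_pi_div_three_pow_val (a : ZMod 3) :
    (Complex.exp (2 * Real.pi * Complex.I / 3) ^ a.val).re = if a = 0 then 1 else -1 / 2 := by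
  have hcos : Real.cos (2 * Real.pi / 3) = -1 / 2 := by
    rw [show 2 * Real.pi / 3 = Real.pi - Real.pi / 3 by ring, Real.cos_pi_sub,
      Real.cos_pi_div_three, neg_div]
  have hre (k : ℕ) : (Complex.exp (2 * Real.pi * Complex.I / 3) ^ k).re =
      Real.cos (k * (2 * Real.pi / 3)) := by
    rw [← Complex.exp_nat_mul, ← Complex.exp_ofReal_mul_I_re]
    push_cast
    ring_nf
  have hcos_two_mul : Real.cos (2 * (2 * Real.pi / 3)) = -1 / 2 := by
    rw [Real.cos_two_mul, hcos]
    norm_num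
  obtain rfl | rfl | rfl : a = 0 ∨ a = 1 ∨ a = 2 := by decide +revert
  · rw [ZMod.val_zero, pow_zero, Complex.one_re, if_pos rfl]
  · rw [hre, if_neg (by decide), show (1 : ZMod 3).val = 1 from rfl, Nat.cast_one, one_mul, hcos]
  · rw [hre, if_neg (by decide), show (2 : ZMod 3).val = 2 from rfl, Nat.cast_ofNat, hcos_two_mul]

variable (f : (ι → ZMod 3) → ZMod 3)

lemma re_walshTransform (w : ι → ZMod 3) :
    (walshTransform f w).re =
      3 / 2 * #{x | f x = w ⬝ᵥ x} - 3 ^ Fintype.card ι / 2 := by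
  have hterm (x : ι → ZMod 3) :
      (Complex.exp (2 * Real.pi * Complex.I / 3) ^ (f x - w ⬝ᵥ x).val).re =
        3 / 2 * (if f x = w ⬝ᵥ x then 1 else 0) - 1 / 2 := by
    rw [re_exp_two_pi_div_three_pow_val]
    simp only [sub_eq_zero]
    split_ifs <;> norm_num
  simp only [walshTransform, Complex.re_sum, hterm, sum_sub_distrib, ← mul_sum, sum_boole,
    sum_const, card_univ, Fintype.card_fun, ZMod.card, nsmul_eq_mul, Nat.cast_pow, Nat.cast_ofNat,
    mul_one_div]

lemma card_add_card_add_card_line (w u : ι → ZMod 3) :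
    #{x | f x = (w + u) ⬝ᵥ x} + #{x | f x = (w - u) ⬝ᵥ x} + #{x | f x = w ⬝ᵥ x} =
      #{x | u ⬝ᵥ x ≠ 0} + 3 * #{x | u ⬝ᵥ x = 0 ∧ f x = w ⬝ᵥ x} := by
  have hsum := sum_card_filter_eq_add_mul f (w ⬝ᵥ ·) (u ⬝ᵥ ·)
  have huniv : (univ : Finset (ZMod 3)) = {1, -1, 0} := by decide
  rw [huniv, sum_insert (by decide), sum_insert (by decide), sum_singleton] at hsum
  simpa only [one_mul, neg_one_mul, zero_mul, add_zero, ← sub_eq_add_neg, ← add_dotProduct,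
    ← sub_dotProduct, ZMod.card, ← add_assoc] using hsum

variable {u : ι → ZMod 3}

lemma re_walshTransform_add_add_eq_card (w : ι → ZMod 3) (hu : u ≠ 0) :
    (walshTransform f (w + u)).re + (walshTransform f (w - u)).re + (walshTransform f w).re =
      9 / 2 * #{x | u ⬝ᵥ x = 0 ∧ f x = w ⬝ᵥ x} - 3 ^ Fintype.card ι / 2 := by
  have hline := card_add_card_add_card_line f w u
  have hker := card_mul_card_dotProduct_eq_zero hu
  have hcompl := card_filter_add_card_filter_not (s := univ) (u ⬝ᵥ · = 0)
  simp only [card_univ, Fintype.card_fun, ZMod.card] at hker hcompl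
  simp only [re_walshTransform]
  rify at hline hker hcompl
  linarith

lemma re_walshTransform_add_add (w : ι → ZMod 3) (hu : u ≠ 0) :
    (walshTransform f (w + u)).re + (walshTransform f (w - u)).re + (walshTransform f w).re =
      3 ^ Fintype.card ι - 9 / 2 * #{x | u ⬝ᵥ x = 0 ∧ f x ≠ w ⬝ᵥ x} := by
  have hsplit : #{x | u ⬝ᵥ x = 0 ∧ f x = w ⬝ᵥ x} + #{x | u ⬝ᵥ x = 0 ∧ f x ≠ w ⬝ᵥ x} =
      #{x | u ⬝ᵥ x = 0} := by
    simp only [← filter_filter, card_filter_add_card_filter_not]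
  have hker := card_mul_card_dotProduct_eq_zero hu
  rw [ZMod.card] at hker
  rify at hsplit hker
  linarith [re_walshTransform_add_add_eq_card f w hu]

lemma re_walshTransform_add_sub_two_mul (w : ι → ZMod 3) (hu : u ≠ 0) :
    (walshTransform f (w + u)).re + (walshTransform f (w - u)).re - 2 * (walshTransform f w).re =
      3 ^ Fintype.card ι - 9 / 2 * #{x | f x = w ⬝ᵥ x ∧ u ⬝ᵥ x ≠ 0} := by
  have hsplit : #{x | u ⬝ᵥ x = 0 ∧ f x = w ⬝ᵥ x} + #{x | f x = w ⬝ᵥ x ∧ u ⬝ᵥ x ≠ 0} =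
      #{x | f x = w ⬝ᵥ x} := by
    simp only [and_comm (a := u ⬝ᵥ _ = 0), ← filter_filter, card_filter_add_card_filter_not]
  rify at hsplit
  linarith [re_walshTransform_add_add_eq_card f w hu, re_walshTransform f w]

lemma re_walshTransform_add_add_eq_iff (w : ι → ZMod 3) (hu : u ≠ 0) :
    (walshTransform f (w + u)).re + (walshTransform f (w - u)).re + (walshTransform f w).re =
      3 ^ Fintype.card ι ↔ ∀ x, u ⬝ᵥ x = 0 → f x = w ⬝ᵥ x := by
  rw [re_walshTransform_add_add f w hu]
  simp [filter_eq_empty_iff]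

lemma re_walshTransform_add_sub_two_mul_eq_iff (w : ι → ZMod 3) (hu : u ≠ 0) :
    (walshTransform f (w + u)).re + (walshTransform f (w - u)).re - 2 * (walshTransform f w).re =
      3 ^ Fintype.card ι ↔ ∀ x, f x = w ⬝ᵥ x → u ⬝ᵥ x = 0 := by
  rw [re_walshTransform_add_sub_two_mul f w hu]
  simp [filter_eq_empty_iff]

end WalshTransform

lemma forall_distinct_add_add_eq_zero_iff {V : Type*} [AddCommGroup V] [Module (ZMod 3) V]
    {P : V → V → V → Prop} :
    (∀ a b c, a ≠ b → a ≠ c → b ≠ c → a + b + c = 0 → P a b c) ↔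
      ∀ w u, u ≠ 0 → P (w + u) (w - u) w := by
  have hthree (v : V) : v + v + v = 0 := by
    have : (3 : ZMod 3) • v = 0 := by rw [show (3 : ZMod 3) = 0 from rfl, zero_smul]
    rw [← this]
    module
  constructor
  · intro h w u hu
    have hne : w + u ≠ w - u := by
      intro heq
      have hneg : u = -u := by rwa [sub_eq_add_neg, add_right_inj] at heq
      have hdouble : u + u = 0 := eq_neg_iff_add_eq_zero.mp hneg
      exact hu (by simpa only [hdouble, zero_add] using hthree u)
    refine h _ _ _ hne (by simpa) (by simpa) ?_
    rw [← hthree w]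
    abel
  · intro h a b c _ hac _ hsum
    have hb : b = c - (a - c) :=
      calc b = (a + b + c) - (c + c + c) + (c - (a - c)) := by abel
        _ = c - (a - c) := by rw [hsum, hthree, sub_zero, zero_add]
    have hP := h c (a - c) (sub_ne_zero.mpr hac)
    rwa [add_sub_cancel, ← hb] at hP

theorem stmt17 (n : ℕ) (hn : 1 ≤ n)
    (f : (Fin n → ZMod 3) → ZMod 3) (hf0 : f 0 = 0)
    (hf : ∀ v : Fin n → ZMod 3, ∃ x, f x ≠ v ⬝ᵥ x)
    (C : Set ({x : Fin n → ZMod 3 // x ≠ 0} → ZMod 3))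
    (hC : C = {c | ∃ (α : ZMod 3) (w : Fin n → ZMod 3),
      c = fun x => α * f x.1 + w ⬝ᵥ x.1})
    (walsh : (Fin n → ZMod 3) → ℂ)
    (hwalsh : ∀ w : Fin n → ZMod 3, walsh w = ∑ x : Fin n → ZMod 3,
      Complex.exp (2 * Real.pi * Complex.I / 3) ^ ((f x - w ⬝ᵥ x).val))
    :
    (∀ c ∈ C, c ≠ 0 → ∀ c' ∈ C, (∀ i, c' i ≠ 0 → c i ≠ 0) →
        ∃ lam : ZMod 3, c' = lam • c) ↔
    (∀ w1 w2 w3 : Fin n → ZMod 3, w1 ≠ w2 → w1 ≠ w3 → w2 ≠ w3 → w1 + w2 + w3 = 0 →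
      (walsh w1).re + (walsh w2).re + (walsh w3).re ≠ 3 ^ n ∧
      (walsh w1).re + (walsh w2).re - 2 * (walsh w3).re ≠ 3 ^ n) := by
  obtain rfl : walsh = walshTransform f := funext hwalsh
  obtain rfl : C = functionCode f := hC.trans (coe_functionCode f).symm
  change IsMinimalCode (functionCode f) ↔ _
  rw [isMinimalCode_functionCode_iff hf0 hf, forall_distinct_add_add_eq_zero_iff]
  refine forall₃_congr fun w u hu ↦ and_congr (not_congr ?_) (not_congr ?_)
  · rw [← re_walshTransform_add_add_eq_iff f w hu, Fintype.card_fin]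
  · rw [← re_walshTransform_add_sub_two_mul_eq_iff f w hu, Fintype.card_fin]
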